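/- arXiv:1708.03452 — 2 statements merged into one kernel-verified Lean document; each statement's English description precedes it below -/
import Mathlib

section
/- Let τ, τ′ ∈ ℂ with τ ≠ 0 and τ′ ≠ 0, and set z = ![![1, 2/τ], ![0, 1]] and w = ![![1, 0], ![2·τ′, 1]] in SL(2, ℂ). If z * w⁻¹ is parabolic, i.e., (trace(z * w⁻¹))² = 4, then τ = τ′. -/
/-!
The trace of `z * w⁻¹` is `2 - x`, where `x = 4τ'/τ` is the product of the off-diagonal entries of
`z` and `w`. Since `(2 - x)² - 4 = x(x - 4)`, parabolicity forces `x = 0` or `x = 4`; the former is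
excluded by `τ' ≠ 0`, and the latter says `τ' = τ`.
-/

section UnipotentPair

open scoped MatrixGroups

variable {R : Type*} [CommRing R]

theorem sq_two_sub_eq_four_iff [NoZeroDivisors R] {x : R} : (2 - x) ^ 2 = 4 ↔ x = 0 ∨ x = 4 := by
  have factorization : (2 - x) ^ 2 - 4 = x * (x - 4) := by ring
  rw [← sub_eq_zero, factorization, mul_eq_zero, sub_eq_zero]

theorem trace_upper_unipotent_mul_inv_lower_unipotent {z w : SL(2, R)} {a b : R}
    (hz : (z : Matrix (Fin 2) (Fin 2) R) = !![1, a; 0, 1])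
    (hw : (w : Matrix (Fin 2) (Fin 2) R) = !![1, 0; b, 1]) :
    Matrix.trace ((z * w⁻¹ : SL(2, R)) : Matrix (Fin 2) (Fin 2) R) = 2 - a * b := by
  rw [Matrix.SpecialLinearGroup.coe_mul, Matrix.SpecialLinearGroup.coe_inv, hz, hw,
    Matrix.adjugate_fin_two_of, Matrix.mul_fin_two, Matrix.trace_fin_two_of]
  ring

theorem trace_sq_upper_unipotent_mul_inv_lower_unipotent_eq_four_iff [NoZeroDivisors R]
    {z w : SL(2, R)} {a b : R}
    (hz : (z : Matrix (Fin 2) (Fin 2) R) = !![1, a; 0, 1])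
    (hw : (w : Matrix (Fin 2) (Fin 2) R) = !![1, 0; b, 1]) :
    Matrix.trace ((z * w⁻¹ : SL(2, R)) : Matrix (Fin 2) (Fin 2) R) ^ 2 = 4 ↔
      a * b = 0 ∨ a * b = 4 := by
  rw [trace_upper_unipotent_mul_inv_lower_unipotent hz hw, sq_two_sub_eq_four_iff]

theorem moduli_of_adjacent_cusps_coincide_general {K : Type*} [Field K] [NeZero (2 : K)]
    {τ τ' : K} (hτ : τ ≠ 0) (hτ' : τ' ≠ 0) {z w : SL(2, K)}
    (hz : (z : Matrix (Fin 2) (Fin 2) K) = !![1, 2 / τ; 0, 1])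
    (hw : (w : Matrix (Fin 2) (Fin 2) K) = !![1, 0; 2 * τ', 1])
    (hpar : Matrix.trace ((z * w⁻¹ : SL(2, K)) : Matrix (Fin 2) (Fin 2) K) ^ 2 = 4) :
    τ = τ' := by
  have two_ne : (2 : K) ≠ 0 := two_ne_zero
  have product_ne : 2 / τ * (2 * τ') ≠ 0 :=
    mul_ne_zero (div_ne_zero two_ne hτ) (mul_ne_zero two_ne hτ')
  have product_eq : 2 / τ * (2 * τ') = 4 :=
    ((trace_sq_upper_unipotent_mul_inv_lower_unipotent_eq_four_iff hz hw).mp hpar).resolve_left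
      product_ne
  have cleared : 2 * (2 * τ') = 4 * τ := by
    rwa [div_mul_eq_mul_div, div_eq_iff hτ] at product_eq
  have scaled : (2 * 2) * τ = (2 * 2) * τ' := by linear_combination -cleared
  exact mul_left_cancel₀ (mul_ne_zero two_ne two_ne) scaled

end UnipotentPair

/-- If `z = !![1, 2/τ; 0, 1]` and `w = !![1, 0; 2·τ′, 1]` in `SL(2, ℂ)` with `τ, τ′ ≠ 0`,
and `z * w⁻¹` is parabolic (its trace squared equals `4`), then `τ = τ′`.
Matrix form of Proposition 5.1: the moduli of the two adjacent cusps coincide. -/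
theorem moduli_of_adjacent_cusps_coincide (τ τ' : ℂ) (hτ : τ ≠ 0) (hτ' : τ' ≠ 0)
    (z w : Matrix.SpecialLinearGroup (Fin 2) ℂ)
    (hz : (z : Matrix (Fin 2) (Fin 2) ℂ) = !![1, 2 / τ; 0, 1])
    (hw : (w : Matrix (Fin 2) (Fin 2) ℂ) = !![1, 0; 2 * τ', 1])
    (hpar : (Matrix.trace ((z * w⁻¹ : Matrix.SpecialLinearGroup (Fin 2) ℂ) :
      Matrix (Fin 2) (Fin 2) ℂ)) ^ 2 = 4) :
    τ = τ' :=
  moduli_of_adjacent_cusps_coincide_general hτ hτ' hz hw hpar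
end

section
/- Let τ ∈ ℂ with Im τ > 0, and set y = ![![1, 0], ![2, 1]] and z = ![![1, 2/τ], ![0, 1]] in SL(2, ℂ). If the commutator y * z * y⁻¹ * z⁻¹ is parabolic, i.e., (trace(y * z * y⁻¹ * z⁻¹))² = 4, then τ = 2·I. -/
/-!
By the Fricke identity, the commutator of two elements of trace `2` in `SL(2)` has trace
`2 + (tr (y z) - 2) ^ 2`. Here `tr (y z) - 2 = 4 / τ` is nonzero, so the commutator can only be
parabolic with trace `-2`. This forces `τ ^ 2 = -4`, whose only root in the upper half-plane
is `2i`.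
-/

section Trace

open Matrix.SpecialLinearGroup
open scoped MatrixGroups

variable {R : Type*} [CommRing R]

local notation "tr(" A ")" => Matrix.trace ((A : SL(2, R)) : Matrix (Fin 2) (Fin 2) R)

theorem SL2_coe_add_coe_inv (A : SL(2, R)) :
    (A : Matrix (Fin 2) (Fin 2) R) + (A⁻¹ : SL(2, R)) = tr(A) • 1 := by
  rw [coe_inv, Matrix.adjugate_fin_two, Matrix.trace_fin_two]
  ext i j
  fin_cases i <;> fin_cases j <;> simp [add_comm]

theorem SL2_trace_mul_add_trace_mul_inv (A B : SL(2, R)) :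
    tr(A * B) + tr(A * B⁻¹) = tr(A) * tr(B) := by
  rw [coe_mul, coe_mul, ← Matrix.trace_add, ← mul_add, SL2_coe_add_coe_inv,
    mul_smul_comm, mul_one, Matrix.trace_smul, smul_eq_mul, mul_comm]

theorem SL2_trace_mul_self (A : SL(2, R)) : tr(A * A) = tr(A) ^ 2 - 2 := by
  have h := SL2_trace_mul_add_trace_mul_inv A A
  rw [mul_inv_cancel, coe_one, Matrix.trace_one, Fintype.card_fin, Nat.cast_ofNat] at h
  linear_combination h

theorem SL2_trace_mul_comm (A B : SL(2, R)) : tr(A * B) = tr(B * A) := by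
  rw [coe_mul, Matrix.trace_mul_comm, ← coe_mul]

/-- The Fricke trace identity; the inverses are eliminated by
`tr (X * Y⁻¹) = tr X * tr Y - tr (X * Y)`. -/
theorem SL2_trace_commutator (A B : SL(2, R)) :
    tr(A * B * A⁻¹ * B⁻¹) =
      tr(A) ^ 2 + tr(B) ^ 2 + tr(A * B) ^ 2 - tr(A) * tr(B) * tr(A * B) - 2 := by
  have trace_conj : tr(A * B * A⁻¹) = tr(B) := by
    rw [SL2_trace_mul_comm, inv_mul_cancel_left]
  have peel_right : tr(A * B * A⁻¹ * B) + tr(A * B * A⁻¹ * B⁻¹) = tr(B) * tr(B) := by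
    rw [SL2_trace_mul_add_trace_mul_inv, trace_conj]
  have peel_middle : tr(A * B * (B⁻¹ * A)) + tr(A * B * A⁻¹ * B) = tr(A * B) * tr(B⁻¹ * A) := by
    rw [← SL2_trace_mul_add_trace_mul_inv, mul_inv_rev, inv_inv, ← mul_assoc (A * B) A⁻¹ B]
  have trace_peeled : tr(A * B * (B⁻¹ * A)) = tr(A) ^ 2 - 2 := by
    rw [mul_assoc, mul_inv_cancel_left, SL2_trace_mul_self]
  have trace_inv_mul : tr(B⁻¹ * A) = tr(A) * tr(B) - tr(A * B) := by
    rw [SL2_trace_mul_comm]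
    linear_combination SL2_trace_mul_add_trace_mul_inv A B
  rw [trace_peeled, trace_inv_mul] at peel_middle
  linear_combination peel_right - peel_middle

theorem SL2_trace_commutator_of_trace_eq_two {A B : SL(2, R)} (hA : tr(A) = 2) (hB : tr(B) = 2) :
    tr(A * B * A⁻¹ * B⁻¹) = 2 + (tr(A * B) - 2) ^ 2 := by
  rw [SL2_trace_commutator, hA, hB]
  ring

theorem SL2_trace_commutator_sq_eq_four_iff [NoZeroDivisors R] {A B : SL(2, R)}
    (hA : tr(A) = 2) (hB : tr(B) = 2) :
    tr(A * B * A⁻¹ * B⁻¹) ^ 2 = 4 ↔ tr(A * B) = 2 ∨ (tr(A * B) - 2) ^ 2 = -4 := by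
  have factored : (2 + (tr(A * B) - 2) ^ 2) ^ 2 - 4 =
      (tr(A * B) - 2) ^ 2 * ((tr(A * B) - 2) ^ 2 + 4) := by
    ring
  rw [SL2_trace_commutator_of_trace_eq_two hA hB, ← sub_eq_zero, factored, mul_eq_zero,
    sq_eq_zero_iff, sub_eq_zero, add_eq_zero_iff_eq_neg]

end Trace

theorem eq_of_sq_eq_sq_of_im_pos_of_im_nonneg {z w : ℂ} (hz : 0 < z.im) (hw : 0 ≤ w.im)
    (h : z ^ 2 = w ^ 2) : z = w := by
  refine (sq_eq_sq_iff_eq_or_eq_neg.mp h).resolve_right fun hneg => ?_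
  have him : z.im = -w.im := by rw [hneg, Complex.neg_im]
  linarith

/-- Matrix form of Proposition 5.6: with `y = !![1, 0; 2, 1]` and `z = !![1, 2/τ; 0, 1]`
in `SL(2, ℂ)`, `Im τ > 0`, if the commutator `y * z * y⁻¹ * z⁻¹` is parabolic
(its trace squared equals `4`), then `τ = 2i`. -/
theorem parabolic_commutator_implies_modulus_two_i (τ : ℂ) (hτ : 0 < τ.im)
    (y z : Matrix.SpecialLinearGroup (Fin 2) ℂ)
    (hy : (y : Matrix (Fin 2) (Fin 2) ℂ) = !![1, 0; 2, 1])
    (hz : (z : Matrix (Fin 2) (Fin 2) ℂ) = !![1, 2 / τ; 0, 1])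
    (hpar : (Matrix.trace ((y * z * y⁻¹ * z⁻¹ : Matrix.SpecialLinearGroup (Fin 2) ℂ) :
      Matrix (Fin 2) (Fin 2) ℂ)) ^ 2 = 4) :
    τ = 2 * Complex.I := by
  have hτ_ne : τ ≠ 0 := by
    rintro rfl
    simp at hτ
  have hy_trace : Matrix.trace (y : Matrix (Fin 2) (Fin 2) ℂ) = 2 := by
    rw [hy, Matrix.trace_fin_two_of, one_add_one_eq_two]
  have hz_trace : Matrix.trace (z : Matrix (Fin 2) (Fin 2) ℂ) = 2 := by
    rw [hz, Matrix.trace_fin_two_of, one_add_one_eq_two]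
  have hyz_trace : Matrix.trace ((y * z : Matrix.SpecialLinearGroup (Fin 2) ℂ) :
      Matrix (Fin 2) (Fin 2) ℂ) = 2 + 4 / τ := by
    rw [Matrix.SpecialLinearGroup.coe_mul, hy, hz, Matrix.mul_fin_two, Matrix.trace_fin_two_of]
    ring
  rw [SL2_trace_commutator_sq_eq_four_iff hy_trace hz_trace, hyz_trace, add_sub_cancel_left] at hpar
  have hquot_sq : (4 / τ) ^ 2 = -4 := hpar.resolve_left (by simp [hτ_ne])
  have hτ_sq : τ ^ 2 = (2 * Complex.I) ^ 2 := by
    rw [mul_pow, Complex.I_sq]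
    field_simp at hquot_sq
    linear_combination hquot_sq
  exact eq_of_sq_eq_sq_of_im_pos_of_im_nonneg hτ (by simp) hτ_sq
end
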